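/- arXiv:1511.03872 — 2 statements merged into one kernel-verified Lean document; each statement's English description precedes it below -/
import Mathlib

section
/- Let k be a positive integer with k = 3m² for some positive integer m. Then N₂(k) = 0 and 48·L₃(k) = N₃(k) − 6·N₂′(k) + 16. -/
/-- Number of ordered pairs of positive integers `x < y` with `x² + y² = k`. -/
noncomputable def L2 (k : ℕ) : ℕ :=
  {p : ℕ × ℕ | 0 < p.1 ∧ p.1 < p.2 ∧ p.1 ^ 2 + p.2 ^ 2 = k}.ncard

/-- Number of ordered pairs of integers with `x² + y² = k`. -/
noncomputable def N2 (k : ℕ) : ℕ :=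
  {p : ℤ × ℤ | p.1 ^ 2 + p.2 ^ 2 = (k : ℤ)}.ncard

/-- Number of ordered pairs of integers with `x² + 2y² = k`. -/
noncomputable def N2' (k : ℕ) : ℕ :=
  {p : ℤ × ℤ | p.1 ^ 2 + 2 * p.2 ^ 2 = (k : ℤ)}.ncard

/-- Number of ordered triples of positive integers `x < y < z` with `x² + y² + z² = k`. -/
noncomputable def L3 (k : ℕ) : ℕ :=
  {t : ℕ × ℕ × ℕ | 0 < t.1 ∧ t.1 < t.2.1 ∧ t.2.1 < t.2.2 ∧
    t.1 ^ 2 + t.2.1 ^ 2 + t.2.2 ^ 2 = k}.ncard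

/-- Number of ordered triples of integers with `x² + y² + z² = k`. -/
noncomputable def N3 (k : ℕ) : ℕ :=
  {t : ℤ × ℤ × ℤ | t.1 ^ 2 + t.2.1 ^ 2 + t.2.2 ^ 2 = (k : ℤ)}.ncard

/-
On the positive solutions of `x² + y² + z² = k`, inclusion–exclusion over the equalities of
coordinates gives `#all = #injective + 3 #{x = y} - 2 #{x = y = z}`, and permuting coordinates
gives `#injective = 6 L₃(k)`. If `k` is not a sum of two squares then no representation of `k` as
`x² + y² + z²` or `x² + 2y²` has a zero coordinate, so the sign changes act freely:
`N₃(k) = 8 #all` and `N₂′(k) = 4 #{x = y}`.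
For `k = 3m²` the only triple with `x = y = z` is `(m, m, m)`, and `k` is not a sum of two squares
because the exponent of `3` in it is odd.
-/

open Function

theorem ncard_natAbs_comp_preimage {ι : Type*} [Fintype ι] {S : Set (ι → ℕ)}
    (hS : ∀ f ∈ S, ∀ i, f i ≠ 0) :
    {f : ι → ℤ | Int.natAbs ∘ f ∈ S}.ncard = 2 ^ Fintype.card ι * S.ncard := by
  let applySigns (p : (ι → ℤˣ) × (ι → ℕ)) : ι → ℤ := fun i ↦ p.1 i * p.2 i
  have natAbs_applySigns (p) : Int.natAbs ∘ applySigns p = p.2 := by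
    ext i
    simp [applySigns, Int.natAbs_mul]
  have mapsTo : Set.MapsTo applySigns (Set.univ ×ˢ S) {f | Int.natAbs ∘ f ∈ S} := by
    rintro p ⟨-, hp⟩
    simpa only [Set.mem_ofPred_eq, natAbs_applySigns] using hp
  have surjOn : Set.SurjOn applySigns (Set.univ ×ˢ S) {f | Int.natAbs ∘ f ∈ S} := by
    intro f hf
    have exists_sign (i) : ∃ u : ℤˣ, u * ((f i).natAbs : ℤ) = f i := by
      rcases Int.natAbs_eq (f i) with h | h
      · exact ⟨1, by simpa using h.symm⟩
      · exact ⟨-1, by simpa using h.symm⟩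
    choose u hu using exists_sign
    exact ⟨(u, Int.natAbs ∘ f), ⟨Set.mem_univ _, hf⟩, funext hu⟩
  have injOn : Set.InjOn applySigns (Set.univ ×ˢ S) := by
    rintro ⟨u, f⟩ ⟨-, hf⟩ ⟨v, g⟩ - h
    obtain rfl : f = g :=
      (natAbs_applySigns (u, f)).symm.trans (h ▸ natAbs_applySigns (v, g))
    have huv (i) : u i = v i :=
      Units.ext (mul_right_cancel₀ (Int.natCast_ne_zero.2 (hS f hf i)) (congrFun h i))
    rw [funext huv]
  rw [← Set.BijOn.ncard_eq ⟨mapsTo, injOn, surjOn⟩, Set.ncard_prod, Set.ncard_univ,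
    Nat.card_fun, Nat.card_eq_fintype_card, Nat.card_eq_fintype_card, Fintype.card_units_int]

theorem ncard_sep_injective {α : Type*} [LinearOrder α] {n : ℕ} {S : Set (Fin n → α)}
    (hS : ∀ f ∈ S, ∀ σ : Equiv.Perm (Fin n), f ∘ σ ∈ S) :
    {f ∈ S | Injective f}.ncard = n.factorial * {f ∈ S | StrictMono f}.ncard := by
  let permute (p : Equiv.Perm (Fin n) × (Fin n → α)) : Fin n → α := p.2 ∘ p.1
  have mapsTo : Set.MapsTo permute (Set.univ ×ˢ {f ∈ S | StrictMono f})
      {f ∈ S | Injective f} := by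
    rintro ⟨σ, g⟩ ⟨-, hg, hmono⟩
    exact ⟨hS g hg σ, hmono.injective.comp σ.injective⟩
  have surjOn : Set.SurjOn permute (Set.univ ×ˢ {f ∈ S | StrictMono f})
      {f ∈ S | Injective f} := by
    rintro f ⟨hf, hinj⟩
    have strictMono_sorted : StrictMono (f ∘ Tuple.sort f) :=
      (Tuple.monotone_sort f).strictMono_of_injective (hinj.comp (Equiv.injective _))
    refine ⟨((Tuple.sort f).symm, f ∘ Tuple.sort f),
      ⟨Set.mem_univ _, hS f hf _, strictMono_sorted⟩, ?_⟩
    ext i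
    simp [permute]
  have injOn : Set.InjOn permute (Set.univ ×ˢ {f ∈ S | StrictMono f}) := by
    rintro ⟨σ, f⟩ ⟨-, -, hf⟩ ⟨τ, g⟩ ⟨-, -, hg⟩ (h : f ∘ σ = g ∘ τ)
    obtain rfl : f = g := by
      apply Set.range_injOn_strictMono hf hg
      rw [← σ.surjective.range_comp f, h, τ.surjective.range_comp g]
    rw [DFunLike.coe_injective (hf.injective.comp_left h)]
  rw [← Set.BijOn.ncard_eq ⟨mapsTo, injOn, surjOn⟩, Set.ncard_prod, Set.ncard_univ,
    Nat.card_perm, Nat.card_fin]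

theorem ncard_sep_apply_perm_eq {ι α : Type*} {S : Set (ι → α)}
    (hS : ∀ f ∈ S, ∀ σ : Equiv.Perm ι, f ∘ σ ∈ S) (σ : Equiv.Perm ι) (i j : ι) :
    {f ∈ S | f (σ i) = f (σ j)}.ncard = {f ∈ S | f i = f j}.ncard := by
  have mem_iff (f : ι → α) : f ∈ S ↔ f ∘ σ ∈ S :=
    ⟨fun hf ↦ hS f hf σ, fun hf ↦ by simpa [comp_assoc] using hS _ hf σ⁻¹⟩
  exact Nat.card_congr ((σ.symm.arrowCongr (Equiv.refl α)).subtypeEquiv fun f ↦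
    and_congr_left' (mem_iff f))

theorem ncard_add_two_mul_ncard_sep_const {α : Type*} {S : Set (Fin 3 → α)} (hfin : S.Finite)
    (hS : ∀ f ∈ S, ∀ σ : Equiv.Perm (Fin 3), f ∘ σ ∈ S) :
    S.ncard + 2 * {f ∈ S | f 0 = f 1 ∧ f 1 = f 2}.ncard =
      {f ∈ S | Injective f}.ncard + 3 * {f ∈ S | f 0 = f 1}.ncard := by
  classical
  have h02 : {f ∈ S | f 0 = f 2}.ncard = {f ∈ S | f 0 = f 1}.ncard :=
    ncard_sep_apply_perm_eq hS (Equiv.swap 1 2) 0 1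
  have h12 : {f ∈ S | f 1 = f 2}.ncard = {f ∈ S | f 0 = f 1}.ncard :=
    ncard_sep_apply_perm_eq hS (finRotate 3) 0 1
  have injective_iff (f : Fin 3 → α) : Injective f ↔ f 0 ≠ f 1 ∧ f 0 ≠ f 2 ∧ f 1 ≠ f 2 := by
    simp only [Injective, Fin.forall_fin_succ]
    grind
  have indicator_identity (f : Fin 3 → α) :
      1 + 2 * (if f 0 = f 1 ∧ f 1 = f 2 then 1 else 0) =
        (if f 0 ≠ f 1 ∧ f 0 ≠ f 2 ∧ f 1 ≠ f 2 then 1 else 0) + (if f 0 = f 1 then 1 else 0) +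
          (if f 0 = f 2 then 1 else 0) + (if f 1 = f 2 then 1 else 0) := by
    grind
  have summed_identity := Finset.sum_congr (rfl : hfin.toFinset = _) fun f _ ↦ indicator_identity f
  have ncard_sep (p : (Fin 3 → α) → Prop) [DecidablePred p] :
      {f ∈ S | p f}.ncard = ∑ f ∈ hfin.toFinset, if p f then 1 else 0 := by
    rw [← Finset.card_filter, ← Set.ncard_coe_finset, Finset.coe_filter]
    simp only [Set.Finite.mem_toFinset]
  simp only [injective_iff]
  simp only [Finset.sum_add_distrib, ← Finset.mul_sum, ← ncard_sep, ← Finset.card_eq_sum_ones,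
    ← Set.ncard_eq_toFinset_card S hfin] at summed_identity
  omega

/-- The representations of `k` as a sum of squares of natural numbers indexed by `ι`: the integer
representations up to signs. Zero coordinates are allowed. -/
def sqReps (ι : Type*) [Fintype ι] (k : ℕ) : Set (ι → ℕ) :=
  {f | ∑ i, f i ^ 2 = k}

theorem sqReps_finite (ι : Type*) [Fintype ι] (k : ℕ) : (sqReps ι k).Finite := by
  classical
  refine (Set.finite_Iic fun _ ↦ k).subset fun f hf i ↦ ?_
  calc f i ≤ f i ^ 2 := Nat.le_self_pow two_ne_zero _
    _ ≤ ∑ j, f j ^ 2 :=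
        Finset.single_le_sum (f := fun j ↦ f j ^ 2) (fun _ _ ↦ Nat.zero_le _) (Finset.mem_univ i)
    _ = k := hf

theorem comp_perm_mem_sqReps {ι : Type*} [Fintype ι] {k : ℕ} :
    ∀ f ∈ sqReps ι k, ∀ σ : Equiv.Perm ι, f ∘ σ ∈ sqReps ι k :=
  fun f hf σ ↦ (Equiv.sum_comp σ fun i ↦ f i ^ 2).trans hf

theorem natAbs_comp_mem_sqReps {ι : Type*} [Fintype ι] {k : ℕ} {f : ι → ℤ} :
    Int.natAbs ∘ f ∈ sqReps ι k ↔ ∑ i, f i ^ 2 = (k : ℤ) := by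
  rw [sqReps, Set.mem_ofPred_eq, ← Nat.cast_inj (R := ℤ)]
  simp

theorem ncard_sqReps_three_const (k : ℕ) :
    {f ∈ sqReps (Fin 3) k | f 0 = f 1 ∧ f 1 = f 2}.ncard = {n : ℕ | k = 3 * n ^ 2}.ncard := by
  have bijOn : Set.BijOn (const (Fin 3)) {n : ℕ | k = 3 * n ^ 2}
      {f ∈ sqReps (Fin 3) k | f 0 = f 1 ∧ f 1 = f 2} := by
    refine ⟨fun n hn ↦ ⟨?_, rfl, rfl⟩, const_injective.injOn, fun f ⟨hf, h01, h12⟩ ↦ ?_⟩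
    · simpa [sqReps] using hn.symm
    · have eq_const : const (Fin 3) (f 0) = f := by
        ext i
        fin_cases i
        exacts [rfl, h01, h01.trans h12]
      rw [← eq_const] at hf
      exact ⟨f 0, by simpa [sqReps] using hf.symm, eq_const⟩
  exact bijOn.ncard_eq.symm

theorem ncard_sqReps_three_apply_eq (k : ℕ) :
    {f ∈ sqReps (Fin 3) k | f 0 = f 1}.ncard =
      {g : Fin 2 → ℕ | g 0 ^ 2 + 2 * g 1 ^ 2 = k}.ncard := by
  let double (g : Fin 2 → ℕ) : Fin 3 → ℕ := ![g 1, g 1, g 0]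
  have sum_double (g) : ∑ i, double g i ^ 2 = g 0 ^ 2 + 2 * g 1 ^ 2 := by
    rw [Fin.sum_univ_three]
    change g 1 ^ 2 + g 1 ^ 2 + g 0 ^ 2 = _
    ring
  have double_injective : Injective double := fun g h hgh ↦ by
    ext i
    fin_cases i
    exacts [congrFun hgh 2, congrFun hgh 0]
  have bijOn : Set.BijOn double {g | g 0 ^ 2 + 2 * g 1 ^ 2 = k}
      {f ∈ sqReps (Fin 3) k | f 0 = f 1} := by
    refine ⟨fun g hg ↦ ⟨(sum_double g).trans hg, rfl⟩, double_injective.injOn,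
      fun f ⟨hf, h01⟩ ↦ ?_⟩
    have eq_double : double ![f 2, f 0] = f := by
      ext i
      fin_cases i
      exacts [rfl, h01, rfl]
    rw [← eq_double] at hf
    exact ⟨_, (sum_double _).symm.trans hf, eq_double⟩
  exact bijOn.ncard_eq.symm

/-- Triples as functions on `Fin 3`, to carry the paper's sets of triples over to `sqReps`. -/
@[simps]
def tripleEquiv (α : Type*) : α × α × α ≃ (Fin 3 → α) where
  toFun t := ![t.1, t.2.1, t.2.2]
  invFun f := (f 0, f 1, f 2)
  left_inv _ := rfl
  right_inv f := by ext i; fin_cases i <;> rfl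

section NotSumOfTwoSquares

variable {k : ℕ} (hk : ¬∃ x y : ℕ, k = x ^ 2 + y ^ 2)
include hk

theorem N2_eq_zero : N2 k = 0 := by
  have empty : {p : ℤ × ℤ | p.1 ^ 2 + p.2 ^ 2 = (k : ℤ)} = ∅ := by
    refine Set.eq_empty_of_forall_notMem fun p hp ↦ hk ⟨p.1.natAbs, p.2.natAbs, ?_⟩
    zify
    simpa only [sq_abs] using hp.symm
  rw [N2, empty, Set.ncard_empty]

theorem ne_zero_of_mem_sqReps_three {f : Fin 3 → ℕ} (hf : f ∈ sqReps (Fin 3) k) (i : Fin 3) :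
    f i ≠ 0 := by
  intro hi
  rw [sqReps, Set.mem_ofPred_eq, Fin.sum_univ_succAbove _ i, Fin.sum_univ_two, hi] at hf
  exact hk ⟨_, _, by simpa using hf.symm⟩

theorem N3_eq_eight_mul : N3 k = 8 * (sqReps (Fin 3) k).ncard := by
  calc N3 k = {f : Fin 3 → ℤ | Int.natAbs ∘ f ∈ sqReps (Fin 3) k}.ncard :=
        Nat.card_congr ((tripleEquiv ℤ).subtypeEquiv fun t ↦ by
          simp [natAbs_comp_mem_sqReps, Fin.sum_univ_three])
    _ = 8 * (sqReps (Fin 3) k).ncard :=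
        ncard_natAbs_comp_preimage fun _ ↦ ne_zero_of_mem_sqReps_three hk

theorem L3_eq_ncard_strictMono : L3 k = {f ∈ sqReps (Fin 3) k | StrictMono f}.ncard := by
  refine Nat.card_congr ((tripleEquiv ℕ).subtypeEquiv fun t ↦ ?_)
  have sum_tripleEquiv :
      ∑ i, tripleEquiv ℕ t i ^ 2 = t.1 ^ 2 + t.2.1 ^ 2 + t.2.2 ^ 2 := Fin.sum_univ_three _
  have strictMono_iff : StrictMono ![t.1, t.2.1, t.2.2] ↔ t.1 < t.2.1 ∧ t.2.1 < t.2.2 := by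
    simp
  constructor
  · rintro ⟨-, h12, h23, hsum⟩
    exact ⟨sum_tripleEquiv.trans hsum, strictMono_iff.2 ⟨h12, h23⟩⟩
  · rintro ⟨hsum, hmono⟩
    obtain ⟨h12, h23⟩ := strictMono_iff.1 hmono
    exact ⟨Nat.pos_of_ne_zero (ne_zero_of_mem_sqReps_three hk hsum 0), h12, h23,
      sum_tripleEquiv.symm.trans hsum⟩

theorem N2'_eq_four_mul : N2' k = 4 * {f ∈ sqReps (Fin 3) k | f 0 = f 1}.ncard := by
  have ne_zero : ∀ g ∈ {g : Fin 2 → ℕ | g 0 ^ 2 + 2 * g 1 ^ 2 = k}, ∀ i, g i ≠ 0 := by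
    intro g (hg : g 0 ^ 2 + 2 * g 1 ^ 2 = k)
    refine Fin.forall_fin_two.2 ⟨fun h0 ↦ hk ⟨g 1, g 1, ?_⟩, fun h1 ↦ hk ⟨g 0, 0, ?_⟩⟩
    · simpa [h0, two_mul] using hg.symm
    · simpa [h1] using hg.symm
  calc N2' k =
          {f : Fin 2 → ℤ | Int.natAbs ∘ f ∈ {g | g 0 ^ 2 + 2 * g 1 ^ 2 = k}}.ncard :=
        Nat.card_congr ((finTwoArrowEquiv ℤ).symm.subtypeEquiv fun p ↦ by
          zify
          simp)
    _ = 4 * {g : Fin 2 → ℕ | g 0 ^ 2 + 2 * g 1 ^ 2 = k}.ncard :=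
        ncard_natAbs_comp_preimage ne_zero
    _ = 4 * {f ∈ sqReps (Fin 3) k | f 0 = f 1}.ncard := by rw [ncard_sqReps_three_apply_eq]

end NotSumOfTwoSquares

theorem not_exists_prime_mul_sq_eq_sq_add_sq {p m : ℕ} (hp : p.Prime) (hp4 : p % 4 = 3)
    (hm : m ≠ 0) : ¬∃ x y : ℕ, p * m ^ 2 = x ^ 2 + y ^ 2 := by
  intro h
  have : Fact p.Prime := ⟨hp⟩
  have even_padicValNat : Even (padicValNat p (p * m ^ 2)) :=
    Nat.eq_sq_add_sq_iff.1 h (q := p) (by simp [hp, hm, hp.ne_zero]) hp4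
  rw [padicValNat.mul hp.ne_zero (pow_ne_zero 2 hm), padicValNat.pow, padicValNat_self]
    at even_padicValNat
  grind

theorem fortyeight_L3_thrice_square_general {k : ℕ} (hk : ¬∃ x y : ℕ, k = x ^ 2 + y ^ 2) :
    N2 k = 0 ∧ 48 * L3 k + 6 * N2' k = N3 k + 16 * {n : ℕ | k = 3 * n ^ 2}.ncard := by
  refine ⟨N2_eq_zero hk, ?_⟩
  have inclusion_exclusion :=
    ncard_add_two_mul_ncard_sep_const (sqReps_finite (Fin 3) k) comp_perm_mem_sqReps
  rw [ncard_sep_injective comp_perm_mem_sqReps, ← L3_eq_ncard_strictMono hk,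
    ncard_sqReps_three_const, show Nat.factorial 3 = 6 from rfl] at inclusion_exclusion
  rw [N3_eq_eight_mul hk, N2'_eq_four_mul hk]
  linarith

theorem fortyeight_L3_thrice_square (k : ℕ) (hk : 0 < k)
    (h : ∃ m : ℕ, 0 < m ∧ k = 3 * m ^ 2) :
    N2 k = 0 ∧ 48 * L3 k + 6 * N2' k = N3 k + 16 := by
  obtain ⟨m, hm, rfl⟩ := h
  simpa using fortyeight_L3_thrice_square_general
    (not_exists_prime_mul_sq_eq_sq_add_sq Nat.prime_three rfl hm.ne')
end

section
/- Let m be a positive integer. The number of ordered triples (ν₁, ν₂, ν₃) of positive integers with ν₁ ≠ ν₃, ν₁ ≡ ν₃ (mod 2), and (ν₁ + 2ν₂ + ν₃)² + 2ν₁² + 2ν₃² = 4m equals 2·L₃(m). -/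
/-!
Reversing `(ν₁, ν₂, ν₃)` preserves the equation, so half of the solutions have `ν₁ < ν₃`. For those,
`ν₁ = y - x`, `ν₂ = z - y`, `ν₃ = y + x` turns the left-hand side into `4 * (x² + y² + z²)`; the
parity condition makes `x` and `y` integers, and positivity becomes `0 < x < y < z`.
-/

open Set

/-- The triples counted by `L3 k`. -/
def strictTriples (k : ℕ) : Set (ℕ × ℕ × ℕ) :=
  {t | 0 < t.1 ∧ t.1 < t.2.1 ∧ t.2.1 < t.2.2 ∧ t.1 ^ 2 + t.2.1 ^ 2 + t.2.2 ^ 2 = k}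

/-- The solutions `(ν₁, ν₂, ν₃)` of the SU(4) equation for `4 * m` with `ν₁ ≠ ν₃` of equal
parity. -/
def evenSU4Solutions (m : ℕ) : Set (ℕ × ℕ × ℕ) :=
  {v | 0 < v.1 ∧ 0 < v.2.1 ∧ 0 < v.2.2 ∧ v.1 ≠ v.2.2 ∧ v.1 % 2 = v.2.2 % 2 ∧
    (v.1 + 2 * v.2.1 + v.2.2) ^ 2 + 2 * v.1 ^ 2 + 2 * v.2.2 ^ 2 = 4 * m}

/-- The triple `(x, y, z)` encoded by `(x, a, b)`, its least entry and its gaps `a = y - x`,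
`b = z - y`. -/
def tripleOfGaps (g : ℕ × ℕ × ℕ) : ℕ × ℕ × ℕ :=
  (g.1, g.1 + g.2.1, g.1 + g.2.1 + g.2.2)

/-- The point `(ν₁, ν₂, ν₃) = (y - x, z - y, y + x)` attached to the triple `(x, y, z)`,
written in terms of `(x, a, b)` as in `tripleOfGaps` so that no truncated subtraction occurs. -/
def su4OfGaps (g : ℕ × ℕ × ℕ) : ℕ × ℕ × ℕ :=
  (g.2.1, g.2.2, g.2.1 + 2 * g.1)

/-- The symmetry `(ν₁, ν₂, ν₃) ↦ (ν₃, ν₂, ν₁)` of the SU(4) equation. -/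
def reverseTriple {α : Type*} (v : α × α × α) : α × α × α :=
  (v.2.2, v.2.1, v.1)

lemma ncard_eq_two_mul_ncard_sep {α : Type*} {s : Set α} {p : α → Prop} {f : α → α}
    (hinv : LeftInvOn f f s) (hmaps : MapsTo f s s) (hp : ∀ a ∈ s, p (f a) ↔ ¬ p a) :
    s.ncard = 2 * {a ∈ s | p a}.ncard := by
  have hbij : BijOn f {a ∈ s | p a} {a ∈ s | ¬ p a} :=
    InvOn.bijOn ⟨hinv.mono (sep_subset s _), hinv.mono (sep_subset s _)⟩
      (fun a ha ↦ ⟨hmaps ha.1, fun h ↦ (hp a ha.1).1 h ha.2⟩)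
      (fun a ha ↦ ⟨hmaps ha.1, (hp a ha.1).2 ha.2⟩)
  have hcard : s.encard = 2 * {a ∈ s | p a}.encard :=
    calc s.encard = {a ∈ s | ¬ p a}.encard + {a ∈ s | p a}.encard :=
          (encard_sdiff_add_encard_inter s {a | p a}).symm
      _ = 2 * {a ∈ s | p a}.encard := by rw [← encard_congr hbij.equiv, two_mul]
  simp only [ncard_def, hcard, ENat.toNat_mul, ENat.toNat_ofNat]

lemma su4_form_eq_four_mul_sum_sq {R : Type*} [CommSemiring R] (x a b : R) :
    (a + 2 * b + (a + 2 * x)) ^ 2 + 2 * a ^ 2 + 2 * (a + 2 * x) ^ 2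
      = 4 * (x ^ 2 + (x + a) ^ 2 + (x + a + b) ^ 2) := by
  ring

lemma tripleOfGaps_injective : Function.Injective tripleOfGaps := by
  rintro ⟨x, a, b⟩ ⟨x', a', b'⟩ h
  simp only [tripleOfGaps, Prod.mk.injEq] at h ⊢
  omega

lemma su4OfGaps_injective : Function.Injective su4OfGaps := by
  rintro ⟨x, a, b⟩ ⟨x', a', b'⟩ h
  simp only [su4OfGaps, Prod.mk.injEq] at h ⊢
  omega

lemma strictTriples_subset_range (k : ℕ) : strictTriples k ⊆ range tripleOfGaps := by
  rintro ⟨x, y, z⟩ ⟨-, hxy, hyz, -⟩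
  dsimp only at hxy hyz
  obtain ⟨a, rfl⟩ := Nat.exists_eq_add_of_le hxy.le
  obtain ⟨b, rfl⟩ := Nat.exists_eq_add_of_le hyz.le
  exact ⟨(x, a, b), rfl⟩

lemma evenSU4Solutions_lt_subset_range (m : ℕ) :
    {v ∈ evenSU4Solutions m | v.1 < v.2.2} ⊆ range su4OfGaps := by
  rintro ⟨a, b, c⟩ ⟨⟨-, -, -, -, hparity, -⟩, hlt⟩
  obtain ⟨x, hx⟩ := (Nat.modEq_iff_dvd' hlt.le).1 hparity
  refine ⟨(x, a, b), ?_⟩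
  simp only [su4OfGaps, ← hx, Nat.add_sub_cancel' hlt.le]

lemma su4OfGaps_preimage_eq_tripleOfGaps_preimage (m : ℕ) :
    su4OfGaps ⁻¹' {v ∈ evenSU4Solutions m | v.1 < v.2.2} = tripleOfGaps ⁻¹' strictTriples m := by
  ext ⟨x, a, b⟩
  simp only [su4OfGaps, tripleOfGaps, evenSU4Solutions, strictTriples, mem_preimage, mem_ofPred_eq,
    su4_form_eq_four_mul_sum_sq]
  omega

lemma ncard_evenSU4Solutions_lt (m : ℕ) :
    {v ∈ evenSU4Solutions m | v.1 < v.2.2}.ncard = L3 m :=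
  calc {v ∈ evenSU4Solutions m | v.1 < v.2.2}.ncard
      = (su4OfGaps ⁻¹' {v ∈ evenSU4Solutions m | v.1 < v.2.2}).ncard :=
        (ncard_preimage_of_injective_subset_range su4OfGaps_injective
          (evenSU4Solutions_lt_subset_range m)).symm
    _ = (tripleOfGaps ⁻¹' strictTriples m).ncard := by
        rw [su4OfGaps_preimage_eq_tripleOfGaps_preimage]
    _ = L3 m :=
        ncard_preimage_of_injective_subset_range tripleOfGaps_injective
          (strictTriples_subset_range m)

lemma reverseTriple_involutive {α : Type*} : Function.Involutive (reverseTriple (α := α)) :=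
  fun _ ↦ rfl

lemma mapsTo_reverseTriple_evenSU4Solutions (m : ℕ) :
    MapsTo reverseTriple (evenSU4Solutions m) (evenSU4Solutions m) := by
  rintro ⟨a, b, c⟩ ⟨ha, hb, hc, hne, hparity, heq⟩
  exact ⟨hc, hb, ha, hne.symm, hparity.symm, by dsimp only [reverseTriple] at heq ⊢; linarith⟩

theorem su4_even_distinct_case (m : ℕ) (hm : 0 < m) :
    {v : ℕ × ℕ × ℕ | 0 < v.1 ∧ 0 < v.2.1 ∧ 0 < v.2.2 ∧ v.1 ≠ v.2.2 ∧
      v.1 % 2 = v.2.2 % 2 ∧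
      (v.1 + 2 * v.2.1 + v.2.2) ^ 2 + 2 * v.1 ^ 2 + 2 * v.2.2 ^ 2 = 4 * m}.ncard
      = 2 * L3 m := by
  have hswap : ∀ v ∈ evenSU4Solutions m,
      (reverseTriple v).1 < (reverseTriple v).2.2 ↔ ¬ v.1 < v.2.2 :=
    fun v ⟨_, _, _, hne, _⟩ ↦ ⟨not_lt_of_gt, fun h ↦ lt_of_le_of_ne (not_lt.1 h) hne.symm⟩
  calc (evenSU4Solutions m).ncard
      = 2 * {v ∈ evenSU4Solutions m | v.1 < v.2.2}.ncard :=
        ncard_eq_two_mul_ncard_sep (reverseTriple_involutive.leftInverse.leftInvOn _)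
          (mapsTo_reverseTriple_evenSU4Solutions m) hswap
    _ = 2 * L3 m := by rw [ncard_evenSU4Solutions_lt]
end
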